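/- Let n ≥ 2 and let 𝒜 = {[A₁],…,[A_r]} be a malnormal subgroup system of F_n, with L, Γ_i and 𝒞 as in the context. Then the finite set 𝒞 is nonempty, and: (1) every g ∈ F_n with |g| ≥ L+2 such that γ_g is not contained in T_B for any B ∈ ⋃_{i=1}^r Γ_i contains an element of 𝒞 as a subword (i.e. g ∈ F_n − 𝒜); in particular, every non-𝒜-peripheral cyclically reduced g ∈ F_n has a power g^m (m ≥ 1) whose reduced word contains the reduced word of an element of 𝒞 as a contiguous subword; (3) if w ∈ F_n contains an element of 𝒞 as a subword, then w ∉ A_i for every i ∈ {1,…,r}. -/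

import Mathlib

/-!
A vertex `h` of the Cayley tree lies on the axis of `a` exactly when the reduced word of `h⁻¹ a h`
is cyclically reduced (`wlen_eq_cycLen`, `isCyc_of_wlen_eq`), and `T_{gAg⁻¹} = g T_A`
(`mem_treeVerts_conj`). Everything rests on one consequence of the diameter bound: two subgroups of
the system whose trees share two vertices at distance `> L` are equal (`eq_of_far`); with
malnormality, if `T_B` and `g T_B` share such vertices then `g` normalizes `B`, so `g ∈ B`
(`mem_of_far`).

* Long words (`exists_tree`). If no subword of length `L + 2` of `g` is in `𝒞`, each such subword
  lies in a translate of some tree; consecutive ones overlap in a segment of length `L + 1`, so all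
  of these trees coincide, and the path of `g` lies in a single `T_B`.
* Powers. If no power of `g` contains an element of `𝒞`, the path of `g ^ (L + 2)` lies in some
  `T_B`; both `T_B` and `g T_B` then contain `g` and `g ^ (L + 2)`, so `g ∈ B` is peripheral.
* Nonemptiness. If `𝒞` is empty, every long word lies in a tree. Let `w = a ^ (L + 2)` for a basis
  element `a`, lying in `T_B`. Any `g` such that `w` is a prefix of the reduced product `g w`
  belongs to `B` (`mem_of_prefix`). Both `g = a` and `g = w d`, for every other basis element `d`,
  qualify, so `B` is the whole group, which is excluded.
* Elements of `A`. If `1 ∈ T_A` and `w ∈ A`, the path of `w` lies in `T_A` (`pathIn_of_mem`), hence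
  every subword of `w` lies in a translate of `T_A` and is not in `𝒞`. The path lemma is an
  induction on `|w|`. If `w` is cyclically reduced, its path lies on its own axis. Otherwise
  `w = x v x⁻¹`; when `x ∈ T_A`, the induction hypothesis applies to `v` and `x⁻¹ A x`; when
  `x ∉ T_A`, a cyclically reduced nontrivial `a ∈ A` neither starts with `x` nor ends with `x⁻¹`, so
  `a w` is a cyclically reduced word and its axis contains `a` times the path of `w`.
-/

open scoped Classical
open MeasureTheory

noncomputable section

namespace RelCurr

/-- The alphabet `𝔄 = ℬ ∪ ℬ⁻¹`: a letter is a generator together with a sign. -/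
abbrev Letter (n : ℕ) := Fin n × Bool

/-- The inverse of a letter. -/
def linv {n : ℕ} (x : Letter n) : Letter n := (x.1, !x.2)

/-- The free group of rank `n` on the basis `Fin n`. -/
abbrev F (n : ℕ) := FreeGroup (Fin n)

/-- The reduced word of an element of `F n`. -/
def rword {n : ℕ} (g : F n) : List (Letter n) := FreeGroup.toWord g

/-- The length `|g|` of the reduced word of `g`. -/
def wlen {n : ℕ} (g : F n) : ℕ := (rword g).length

/-- The single-letter element of `F n` given by a letter. -/
def letterE {n : ℕ} (b : Letter n) : F n := FreeGroup.mk [b]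

/-- The conjugate subgroup `g A g⁻¹`. -/
def conjSub {n : ℕ} (g : F n) (A : Subgroup (F n)) : Subgroup (F n) :=
  Subgroup.map (MulAut.conj g).toMonoidHom A

/-- A subgroup `A` is malnormal if `xAx⁻¹ ∩ A = {1}` for every `x ∉ A`. -/
def Malnormal {n : ℕ} (A : Subgroup (F n)) : Prop :=
  ∀ x : F n, x ∉ A → conjSub x A ⊓ A = ⊥

/-- The word metric on the Cayley tree `T`. -/
def dist' {n : ℕ} (x y : F n) : ℕ := wlen (x⁻¹ * y)

/-- The cyclically reduced length of `a`. -/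
def cycLen {n : ℕ} (a : F n) : ℕ := sInf { m | ∃ h : F n, wlen (h⁻¹ * a * h) = m }

/-- The vertex set of the minimal `A`-invariant subtree `T_A` of the Cayley tree:
the union of the axes of the nontrivial elements of `A`. -/
def treeVerts {n : ℕ} (A : Subgroup (F n)) : Set (F n) :=
  { h | ∃ a ∈ A, a ≠ 1 ∧ wlen (h⁻¹ * a * h) = cycLen a }

/-- `γ_w ⊆ S`: every prefix of the reduced word of `w` lies in the vertex set `S`. -/
def pathIn {n : ℕ} (w : F n) (S : Set (F n)) : Prop :=
  ∀ m ≤ wlen w, FreeGroup.mk ((rword w).take m) ∈ S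

/-- An element is cyclically reduced if the last letter of its reduced word is not the
inverse of the first letter. -/
def CyclicallyReduced {n : ℕ} (w : F n) : Prop :=
  ∀ x y : Letter n, (rword w).head? = some x → (rword w).getLast? = some y → y ≠ linv x

/-- `v` is a length-one extension of `w`. -/
def LengthOneExt {n : ℕ} (w v : F n) : Prop :=
  ∃ b : Letter n, v = w * letterE b ∧ wlen v = wlen w + 1

/-- `a` is an extension of `w`: the reduced word of `w` is a proper prefix of that of `a`. -/
def ExtensionOf {n : ℕ} (w a : F n) : Prop :=
  rword w <+: rword a ∧ wlen w < wlen a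

/-- `g` is a proper power. -/
def IsProperPower {n : ℕ} (g : F n) : Prop := ∃ (h : F n) (k : ℕ), 2 ≤ k ∧ g = h ^ k

section System

variable {n r : ℕ} (A : Fin r → Subgroup (F n))

/-- `[B] ∈ 𝒜`, i.e. `B` is a conjugate of one of the subgroups of the system. -/
def InSystem (B : Subgroup (F n)) : Prop := ∃ (i : Fin r) (g : F n), B = conjSub g (A i)

/-- The family `A` represents a subgroup system: finite rank subgroups distinct
from `{1}` and `F n`. -/
def IsSystem : Prop := (∀ i, (A i).FG) ∧ (∀ i, A i ≠ ⊥) ∧ (∀ i, A i ≠ ⊤)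

/-- The subgroup system is malnormal. -/
def SystemMalnormal : Prop :=
  (∀ i, Malnormal (A i)) ∧
  ∀ B₁ B₂ : Subgroup (F n), InSystem A B₁ → InSystem A B₂ → B₁ ≠ B₂ → B₁ ⊓ B₂ = ⊥

/-- `g` is `𝒜`-peripheral: trivial or contained in a conjugate of one of the `A i`. -/
def Peripheral (g : F n) : Prop := g = 1 ∨ ∃ B, InSystem A B ∧ g ∈ B

/-- The diameter of the intersection of the trees of two distinct subgroups of the
system is at most `L`. -/
def DiamBound (L : ℕ) : Prop :=
  ∀ B₁ B₂ : Subgroup (F n), InSystem A B₁ → InSystem A B₂ → B₁ ≠ B₂ →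
    ∀ x ∈ treeVerts B₁ ∩ treeVerts B₂, ∀ y ∈ treeVerts B₁ ∩ treeVerts B₂, dist' x y ≤ L

/-- `B ∈ Γ_i`: `B` is a conjugate of `A i` whose tree contains the base point `1`. -/
def GammaMem (i : Fin r) (B : Subgroup (F n)) : Prop :=
  (∃ g : F n, B = conjSub g (A i)) ∧ (1 : F n) ∈ treeVerts B

/-- The finite set `𝒞` of words of length `L+2` whose path is contained in no tree
`T_B` with `B ∈ Γ_i`, for every `i`. -/
def Ccal (L : ℕ) : Set (F n) :=
  { w | wlen w = L + 2 ∧ ∀ (i : Fin r) (B : Subgroup (F n)), GammaMem A i B →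
      ¬ pathIn w (treeVerts B) }

/-- `F_n − 𝒜`: the words containing an element of `𝒞` as a contiguous subword. -/
def FmA (L : ℕ) : Set (F n) := { w | ∃ x ∈ Ccal A L, rword x <:+: rword w }

/-- `S_k`: words of length `k` not containing any element of `𝒞` as a subword. -/
def Sk (L k : ℕ) : Set (F n) := { w | wlen w = k ∧ w ∉ FmA A L }

end System

/-! ### The boundary of `F n` -/

/-- An infinite reduced word. -/
def IsRed {n : ℕ} (ξ : ℕ → Letter n) : Prop := ∀ i, ξ (i + 1) ≠ linv (ξ i)

/-- The Gromov boundary `∂F_n`, realized as the space of infinite reduced words,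
topologized as a subspace of the product space. -/
def Boundary (n : ℕ) : Type := { ξ : ℕ → Letter n // IsRed ξ }

instance {n : ℕ} : TopologicalSpace (Boundary n) :=
  instTopologicalSpaceSubtype

/-- The length-`m` prefix of a boundary point. -/
def bpre {n : ℕ} (ξ : Boundary n) (m : ℕ) : List (Letter n) :=
  (List.range m).map ξ.1

/-- The reduced word of `w` is a prefix of the infinite word `ξ`. -/
def wordPrefixOf {n : ℕ} (w : F n) (ξ : Boundary n) : Prop :=
  bpre ξ (wlen w) = rword w

/-- The boundary (limit set) `∂A ⊆ ∂F_n` of a subgroup `A`. -/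
def limitSet {n : ℕ} (A : Subgroup (F n)) : Set (Boundary n) :=
  { ξ | ∀ m : ℕ, ∃ a ∈ A, bpre ξ m <+: rword a }

/-- `ξ = g^{+∞}`: `ξ` is the limit of the reduced words of the powers of `g`. -/
def IsPosLimit {n : ℕ} (g : F n) (ξ : Boundary n) : Prop :=
  ∀ m : ℕ, ∃ N : ℕ, ∀ k ≥ N, bpre ξ m <+: rword (g ^ k)

/-- The number of letters cancelled when concatenating the word `l` with the
infinite reduced word `ξ`. -/
def cancelLen {n : ℕ} (l : List (Letter n)) (ξ : ℕ → Letter n) : ℕ :=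
  sSup { j | j ≤ l.length ∧ ∀ i < j, l.reverse[i]? = some (linv (ξ i)) }

/-- The sequence underlying the action of `g` on a boundary point: left multiplication
followed by cancellation. -/
def actSeq {n : ℕ} (g : F n) (ξ : ℕ → Letter n) : ℕ → Letter n :=
  fun m =>
    if h : m < (rword g).length - cancelLen (rword g) ξ then
      (rword g).get ⟨m, by omega⟩
    else ξ (m - ((rword g).length - cancelLen (rword g) ξ) + cancelLen (rword g) ξ)

/-- The action of `F n` on its boundary: left multiplication followed by cancellation.
(The sequence `actSeq g ξ.1` is always reduced, so the first branch always applies.) -/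
def bAct {n : ℕ} (g : F n) (ξ : Boundary n) : Boundary n :=
  if h : IsRed (actSeq g ξ.1) then ⟨actSeq g ξ.1, h⟩ else ξ

/-! ### The double boundary -/

/-- The diagonal action of `F n` on `Sym2 (∂F_n)`, whose restriction to the set of
non-diagonal classes is the action on the double boundary `∂²F_n`. -/
def dbAct {n : ℕ} (g : F n) : Sym2 (Boundary n) → Sym2 (Boundary n) := Sym2.map (bAct g)

/-- `∂²𝒜`: the classes `{ξ,η}` with both endpoints in `g·∂A_i = ∂(gA_ig⁻¹)` for some
`i` and `g`. -/
def dblBndA {n r : ℕ} (A : Fin r → Subgroup (F n)) : Set (Sym2 (Boundary n)) :=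
  { z | ∃ (i : Fin r) (g : F n) (ξ η : Boundary n), z = s(ξ, η) ∧
      ξ ∈ limitSet (conjSub g (A i)) ∧ η ∈ limitSet (conjSub g (A i)) }

/-- The double boundary `∂²(F_n,𝒜)` of `F n` relative to `𝒜`, as a subset of
`Sym2 (∂F_n)`: non-diagonal classes not lying in `∂²𝒜`. -/
def relSet {n r : ℕ} (A : Fin r → Subgroup (F n)) : Set (Sym2 (Boundary n)) :=
  { z | ¬ z.IsDiag } \ dblBndA A

/-- The cylinder set `C(γ_w) ⊆ ∂²F_n` of the geodesic path from `1` to `w`. -/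
def cylinder {n : ℕ} (w : F n) : Set (Sym2 (Boundary n)) :=
  { z | ∃ ξ η : Boundary n, z = s(ξ, η) ∧ ξ.1 0 ≠ η.1 0 ∧
      (wordPrefixOf w ξ ∨ wordPrefixOf w η) }

instance {n : ℕ} : MeasurableSpace (Sym2 (Boundary n)) := borel _

/-- The action of `g ∈ F n` on `∂²(F_n,𝒜)`. (The action of `F n` preserves
`∂²(F_n,𝒜)`, so the first branch always applies.) -/
def relAct {n r : ℕ} (A : Fin r → Subgroup (F n)) (g : F n) (z : ↥(relSet A)) :
    ↥(relSet A) :=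
  if h : dbAct g z.1 ∈ relSet A then ⟨dbAct g z.1, h⟩ else z

/-- The cylinder `C(γ_w)` as a subset of `∂²(F_n,𝒜)`. -/
def relCyl {n r : ℕ} (A : Fin r → Subgroup (F n)) (w : F n) : Set ↥(relSet A) :=
  Subtype.val ⁻¹' cylinder w

/-- The translated cylinder `g·C(γ_w)` as a subset of `∂²(F_n,𝒜)`. -/
def relCylG {n r : ℕ} (A : Fin r → Subgroup (F n)) (g w : F n) : Set ↥(relSet A) :=
  Subtype.val ⁻¹' (dbAct g '' cylinder w)

/-- A relative current on `(F_n,𝒜)`: an `F_n`-invariant Radon measure on the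
locally compact space `∂²(F_n,𝒜)` (finite on compacts, outer regular, inner regular
on open sets). -/
def IsRelCurrent {n r : ℕ} (A : Fin r → Subgroup (F n)) (μ : Measure ↥(relSet A)) : Prop :=
  (∀ (g : F n) (s : Set ↥(relSet A)), MeasurableSet s → μ (relAct A g ⁻¹' s) = μ s) ∧
  μ.Regular

/-- The `F_n`-orbit of a point of `Sym2 (∂F_n)`, inside `∂²(F_n,𝒜)`. -/
def orbitOf {n r : ℕ} (A : Fin r → Subgroup (F n)) (z : Sym2 (Boundary n)) :
    Set ↥(relSet A) :=
  { y | ∃ h : F n, (y : Sym2 (Boundary n)) = dbAct h z }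


/-! ### Word length and cyclically reduced words -/

lemma rword_mk {n : ℕ} {l : List (Letter n)} (h : FreeGroup.IsReduced l) :
    rword (FreeGroup.mk l) = l := h.reduce_eq

lemma wlen_mk {n : ℕ} {l : List (Letter n)} (h : FreeGroup.IsReduced l) :
    wlen (FreeGroup.mk l) = l.length := by rw [wlen, rword_mk h]

lemma wlen_mk_le {n : ℕ} (l : List (Letter n)) : wlen (FreeGroup.mk l) ≤ l.length :=
  FreeGroup.norm_mk_le

lemma mk_rword {n : ℕ} (g : F n) : FreeGroup.mk (rword g) = g := FreeGroup.mk_toWord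

lemma isReduced_rword {n : ℕ} (g : F n) : FreeGroup.IsReduced (rword g) :=
  FreeGroup.isReduced_toWord

lemma wlen_mul_le {n : ℕ} (g h : F n) : wlen (g * h) ≤ wlen g + wlen h :=
  FreeGroup.norm_mul_le g h

lemma wlen_inv {n : ℕ} (g : F n) : wlen g⁻¹ = wlen g := FreeGroup.norm_inv_eq

lemma wlen_pow_le {n : ℕ} (g : F n) (k : ℕ) : wlen (g ^ k) ≤ k * wlen g := by
  induction k with
  | zero => simp [wlen, rword]
  | succ k ih =>
    rw [pow_succ]
    have := wlen_mul_le (g ^ k) g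
    linarith

lemma rword_pow {n : ℕ} {g : F n} (h : FreeGroup.IsCyclicallyReduced (rword g)) (k : ℕ) :
    rword (g ^ k) = (List.replicate k (rword g)).flatten := by
  conv_lhs => rw [← mk_rword g, FreeGroup.pow_mk]
  exact rword_mk (h.flatten_replicate k).isReduced

lemma wlen_pow {n : ℕ} {g : F n} (h : FreeGroup.IsCyclicallyReduced (rword g)) (k : ℕ) :
    wlen (g ^ k) = k * wlen g := by
  rw [wlen, rword_pow h]; simp [wlen]

lemma cycLen_le {n : ℕ} (a h : F n) : cycLen a ≤ wlen (h⁻¹ * a * h) :=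
  Nat.sInf_le ⟨h, rfl⟩

lemma exists_cycLen {n : ℕ} (a : F n) : ∃ h : F n, wlen (h⁻¹ * a * h) = cycLen a :=
  Nat.sInf_mem (s := { m | ∃ h : F n, wlen (h⁻¹ * a * h) = m }) ⟨_, 1, rfl⟩

/-- A cyclically reduced word has minimal length in its conjugacy class: otherwise the powers of a
shorter conjugate would make `|g ^ k| = k |g|` fail for large `k`. -/
lemma wlen_eq_cycLen {n : ℕ} {g : F n} (hg : FreeGroup.IsCyclicallyReduced (rword g)) :
    wlen g = cycLen g := by
  apply le_antisymm
  · obtain ⟨h, hh⟩ := exists_cycLen g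
    rw [← hh]
    by_contra! hlt
    set c := h⁻¹ * g * h with hc
    have key : ∀ k : ℕ, k * wlen g ≤ 2 * wlen h + k * wlen c := by
      intro k
      have e : g ^ k = h * c ^ k * h⁻¹ := by
        rw [← conj_pow, hc]; congr 1; group
      have h1 := wlen_mul_le (h * c ^ k) h⁻¹
      have h2 := wlen_mul_le h (c ^ k)
      have h3 := wlen_pow_le c k
      rw [← e, wlen_pow hg, wlen_inv] at h1
      omega
    have := key (2 * wlen h + 1)
    nlinarith
  · simpa using cycLen_le g 1

lemma isCyc_of_wlen_eq {n : ℕ} {g : F n} (hg : wlen g = cycLen g) :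
    FreeGroup.IsCyclicallyReduced (rword g) := by
  refine ⟨isReduced_rword g, fun a ha b hb hab => ?_⟩
  by_contra hne
  have hnil : rword g ≠ [] := by rintro h; simp [h] at ha
  obtain ⟨x, t, hxt⟩ := List.exists_cons_of_ne_nil hnil
  rw [hxt] at ha hb
  obtain rfl : x = b := by simpa using hb
  rcases t.eq_nil_or_concat with rfl | ⟨m, y, rfl⟩
  · simp at ha; subst ha; exact hne rfl
  obtain rfl : y = a := by
    rw [List.concat_eq_append, ← List.cons_append] at ha
    simpa only [List.getLast?_concat, Option.mem_def, Option.some.injEq] using ha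
  have hy : FreeGroup.mk [y] = (FreeGroup.mk [x])⁻¹ := by
    rw [FreeGroup.inv_mk]
    congr 1
    simp only [FreeGroup.invRev, List.map_cons, List.map_nil, List.reverse_singleton]
    congr 1
    ext <;> simp [hab]
    cases h1 : y.2 <;> cases h2 : x.2 <;> simp_all
  have e : g = FreeGroup.mk [x] * FreeGroup.mk m * (FreeGroup.mk [x])⁻¹ := by
    rw [← hy, FreeGroup.mul_mk, FreeGroup.mul_mk, ← mk_rword g, hxt]
    simp
  have h1 := cycLen_le g (FreeGroup.mk [x])
  have h2 : (FreeGroup.mk [x])⁻¹ * g * FreeGroup.mk [x] = FreeGroup.mk m := by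
    rw [e]; group
  rw [h2, ← hg] at h1
  have h3 := wlen_mk_le m
  have h4 : wlen g = m.length + 2 := by rw [wlen, hxt]; simp
  omega

lemma cycLen_conj {n : ℕ} (g a : F n) : cycLen (g * a * g⁻¹) = cycLen a := by
  apply le_antisymm
  · obtain ⟨h, hh⟩ := exists_cycLen a
    rw [← hh]
    refine (cycLen_le (g * a * g⁻¹) (g * h)).trans_eq (congrArg wlen ?_)
    group
  · obtain ⟨h, hh⟩ := exists_cycLen (g * a * g⁻¹)
    rw [← hh]
    refine (cycLen_le a (g⁻¹ * h)).trans_eq (congrArg wlen ?_)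
    group

lemma cyclicallyReduced_iff {n : ℕ} (g : F n) :
    CyclicallyReduced g ↔ FreeGroup.IsCyclicallyReduced (rword g) := by
  constructor
  · intro h
    refine ⟨isReduced_rword g, fun a ha b hb hab => ?_⟩
    have := h b a hb ha
    by_contra hne
    apply this
    ext
    · exact congrArg Fin.val hab
    · simp only [linv]; cases h1 : a.2 <;> cases h2 : b.2 <;> simp_all
  · rintro ⟨-, h⟩ x y hx hy rfl
    simpa [linv] using h _ hy _ hx

/-! ### Translates of trees -/

lemma mem_conjSub {n : ℕ} {g b : F n} {A : Subgroup (F n)} :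
    b ∈ conjSub g A ↔ g⁻¹ * b * g ∈ A := by
  rw [conjSub, Subgroup.mem_map]
  constructor
  · rintro ⟨a, ha, rfl⟩
    simpa [mul_assoc] using ha
  · intro h
    exact ⟨_, h, by simp [mul_assoc]⟩

lemma conjSub_conjSub {n : ℕ} (g h : F n) (A : Subgroup (F n)) :
    conjSub g (conjSub h A) = conjSub (g * h) A := by
  ext b
  simp [mem_conjSub, mul_assoc]

lemma conjSub_of_mem {n : ℕ} {g : F n} {A : Subgroup (F n)} (hg : g ∈ A) : conjSub g A = A := by
  ext b
  rw [mem_conjSub, A.mul_mem_cancel_right hg, A.mul_mem_cancel_left (A.inv_mem hg)]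

lemma mem_treeVerts_conj {n : ℕ} {g h : F n} {A : Subgroup (F n)} :
    h ∈ treeVerts (conjSub g A) ↔ g⁻¹ * h ∈ treeVerts A := by
  constructor
  · rintro ⟨a, ha, ha1, hl⟩
    refine ⟨g⁻¹ * a * g, mem_conjSub.1 ha, fun h1 => ha1 ?_, ?_⟩
    · have : a = g * (g⁻¹ * a * g) * g⁻¹ := by group
      rw [this, h1]; simp
    · have := cycLen_conj g⁻¹ a
      rw [inv_inv] at this
      rw [this, ← hl]; congr 1; group
  · rintro ⟨a, ha, ha1, hl⟩
    refine ⟨g * a * g⁻¹, mem_conjSub.2 (by simpa [mul_assoc] using ha), by simpa using ha1, ?_⟩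
    rw [cycLen_conj, ← hl]; congr 1; group

lemma smul_mem_treeVerts {n : ℕ} {g h : F n} {A : Subgroup (F n)} (hg : g ∈ A)
    (h' : g * h ∈ treeVerts A) : h ∈ treeVerts A := by
  have := conjSub_of_mem (A.inv_mem hg)
  rw [← this, mem_treeVerts_conj]
  simpa using h'

lemma inSystem_conj {n r : ℕ} {A : Fin r → Subgroup (F n)} {B : Subgroup (F n)}
    (hB : InSystem A B) (g : F n) : InSystem A (conjSub g B) := by
  obtain ⟨i, h, rfl⟩ := hB
  exact ⟨i, g * h, conjSub_conjSub _ _ _⟩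

lemma GammaMem.inSystem {n r : ℕ} {A : Fin r → Subgroup (F n)} {i : Fin r} {B : Subgroup (F n)}
    (h : GammaMem A i B) : InSystem A B := by
  obtain ⟨⟨g, rfl⟩, -⟩ := h
  exact ⟨i, g, rfl⟩

/-- Two subgroups of the system whose trees share two vertices at distance `> L` are equal. -/
lemma eq_of_far {n r L : ℕ} {A : Fin r → Subgroup (F n)} (hdiam : DiamBound A L)
    {B₁ B₂ : Subgroup (F n)} (h₁ : InSystem A B₁) (h₂ : InSystem A B₂) {x y : F n}
    (hx₁ : x ∈ treeVerts B₁) (hx₂ : x ∈ treeVerts B₂) (hy₁ : y ∈ treeVerts B₁)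
    (hy₂ : y ∈ treeVerts B₂) (hd : L < wlen (x⁻¹ * y)) : B₁ = B₂ := by
  by_contra hne
  exact absurd (hdiam B₁ B₂ h₁ h₂ hne x ⟨hx₁, hx₂⟩ y ⟨hy₁, hy₂⟩) (not_le.2 hd)

/-- If `T_B` and `g T_B` share the vertices `g x` and `g y` with `d(x, y) > L`, then `g`
normalizes `B`, so `g ∈ B` by malnormality. -/
lemma mem_of_far {n r L : ℕ} {A : Fin r → Subgroup (F n)} (hsys : IsSystem A)
    (hmal : SystemMalnormal A) (hdiam : DiamBound A L)
    {B : Subgroup (F n)} (hB : InSystem A B) {g x y : F n}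
    (hx : x ∈ treeVerts B) (hy : y ∈ treeVerts B)
    (hgx : g * x ∈ treeVerts B) (hgy : g * y ∈ treeVerts B)
    (hd : L < wlen (x⁻¹ * y)) : g ∈ B := by
  have e : conjSub g B = B :=
    eq_of_far hdiam (inSystem_conj hB g) hB (x := g * x) (y := g * y)
      (mem_treeVerts_conj.2 (by simpa using hx)) hgx
      (mem_treeVerts_conj.2 (by simpa using hy)) hgy
      (by convert hd using 2; group)
  obtain ⟨i, h, rfl⟩ := hB
  by_contra hg
  rw [mem_conjSub] at hg
  have h1 := hmal.1 i _ hg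
  have e2 : conjSub (h⁻¹ * g * h) (A i) = A i := by
    have := congrArg (conjSub h⁻¹) e
    rw [conjSub_conjSub, conjSub_conjSub, conjSub_conjSub, inv_mul_cancel, mul_assoc] at this
    rw [mul_assoc, this]
    ext b; simp [mem_conjSub]
  rw [e2, inf_idem] at h1
  exact hsys.2.1 i h1

/-! ### Paths of elements of a subgroup -/

/-- Every prefix of a cyclically reduced element of `A` lies on its axis: conjugating by a prefix
permutes the word cyclically. -/
lemma prefix_mem_of_cyc {n : ℕ} {A : Subgroup (F n)} {g : F n} (hg : g ∈ A) (h1 : g ≠ 1)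
    (hc : FreeGroup.IsCyclicallyReduced (rword g)) {p : List (Letter n)} (hp : p <+: rword g) :
    FreeGroup.mk p ∈ treeVerts A := by
  obtain ⟨s, hs⟩ := hp
  refine ⟨g, hg, h1, le_antisymm ?_ (cycLen_le _ _)⟩
  have e : g = FreeGroup.mk p * FreeGroup.mk s := by
    rw [FreeGroup.mul_mk, hs, mk_rword]
  have e2 : (FreeGroup.mk p)⁻¹ * g * FreeGroup.mk p = FreeGroup.mk (s ++ p) := by
    rw [← FreeGroup.mul_mk, e]; group
  have hlen : wlen g = (s ++ p).length := by
    rw [wlen, ← hs, List.length_append, List.length_append, add_comm]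
  rw [e2, ← wlen_eq_cycLen hc, hlen]
  exact wlen_mk_le _

/-- If `1 ∈ T_A`, the path of every element of `A` lies in `T_A`. -/
lemma pathIn_of_mem {n : ℕ} (N : ℕ) : ∀ (A : Subgroup (F n)) (w : F n), wlen w = N → w ∈ A →
    (1 : F n) ∈ treeVerts A → ∀ p, p <+: rword w → FreeGroup.mk p ∈ treeVerts A := by
  induction N using Nat.strong_induction_on with
  | _ N ih =>
  intro A w hN hw h1 p hp
  have hwT : w ∈ treeVerts A := by
    apply smul_mem_treeVerts (A.inv_mem hw); simpa using h1
  by_cases hc : FreeGroup.IsCyclicallyReduced (rword w)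
  · by_cases hw1 : w = 1
    · subst hw1
      have : p = [] := by simpa [rword] using hp
      subst this; exact h1
    · exact prefix_mem_of_cyc hw hw1 hc hp
  -- `w = x v x⁻¹` as a reduced word, with `y` the inverse letter of `x`
  obtain ⟨x, y, v, hwv, hyx1, hyx2⟩ : ∃ x y v, rword w = x :: (v ++ [y]) ∧ y.1 = x.1 ∧
      y.2 ≠ x.2 := by
    simp only [FreeGroup.IsCyclicallyReduced, isReduced_rword w, true_and, not_forall] at hc
    obtain ⟨y, hy, x, hx, h12, h3⟩ := hc
    have hnil : rword w ≠ [] := by rintro h; simp [h] at hx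
    obtain ⟨x', t, hxt⟩ := List.exists_cons_of_ne_nil hnil
    rw [hxt] at hx hy
    obtain rfl : x' = x := by simpa using hx
    rcases t.eq_nil_or_concat with rfl | ⟨m, y', rfl⟩
    · simp at hy; subst hy; exact absurd rfl h3
    rw [List.concat_eq_append] at hy hxt
    obtain rfl : y' = y := by
      rw [← List.cons_append] at hy
      simpa only [List.getLast?_concat, Option.mem_def, Option.some.injEq] using hy
    exact ⟨_, _, _, hxt, h12, h3⟩
  have hy : y = (x.1, !x.2) := by
    ext
    · exact congrArg Fin.val hyx1
    · cases h1 : y.2 <;> cases h2 : x.2 <;> simp_all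
  have hymk : FreeGroup.mk [y] = (FreeGroup.mk [x])⁻¹ := by
    rw [FreeGroup.inv_mk, hy]; simp [FreeGroup.invRev]
  have hwe : w = FreeGroup.mk [x] * FreeGroup.mk v * (FreeGroup.mk [x])⁻¹ := by
    rw [← hymk, FreeGroup.mul_mk, FreeGroup.mul_mk, ← mk_rword w, hwv]; simp
  by_cases hxT : FreeGroup.mk [x] ∈ treeVerts A
  · have hv : FreeGroup.IsReduced v :=
      (isReduced_rword w).infix ⟨[x], [y], by rw [hwv]; simp⟩
    have hIH := ih v.length (by rw [← hN, wlen, hwv]; simp)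
      (conjSub (FreeGroup.mk [x])⁻¹ A) (FreeGroup.mk v) (wlen_mk hv)
      (by rw [mem_conjSub, inv_inv, ← hwe]; exact hw)
      (by rw [mem_treeVerts_conj]; simpa using hxT)
    rw [rword_mk hv] at hIH
    rw [hwv] at hp
    rcases List.prefix_cons_iff.1 hp with rfl | ⟨q, rfl, hq⟩
    · exact h1
    rcases List.prefix_concat_iff.1 hq with rfl | hq
    · rw [← hwv, mk_rword]; exact hwT
    · have := hIH q hq
      rw [mem_treeVerts_conj, inv_inv, FreeGroup.mul_mk] at this
      exact this
  · obtain ⟨a, ha, ha1, hal⟩ := h1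
    have hac : FreeGroup.IsCyclicallyReduced (rword a) := by
      apply isCyc_of_wlen_eq; simpa using hal
    have hnil : rword a ≠ [] := by
      rintro h; apply ha1; rw [← mk_rword a, h]; rfl
    -- otherwise `x` lies on the axis of `a`
    have hhead : ∀ z ∈ (rword a).head?, z ≠ x := by
      rintro z hz rfl
      apply hxT
      apply prefix_mem_of_cyc ha ha1 hac
      obtain ⟨x', t, hxt⟩ := List.exists_cons_of_ne_nil hnil
      rw [hxt] at hz ⊢
      obtain rfl : x' = z := by simpa using hz
      simp
    have hlast : ∀ z ∈ (rword a).getLast?, z ≠ y := by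
      rintro z hz rfl
      apply hxT
      obtain ⟨t, ht⟩ := List.getLast?_eq_some_iff.1 hz
      have e : a = FreeGroup.mk t * (FreeGroup.mk [x])⁻¹ := by
        rw [← hymk, FreeGroup.mul_mk, ← ht, mk_rword]
      apply smul_mem_treeVerts ha
      rw [e, inv_mul_cancel_right]
      exact prefix_mem_of_cyc ha ha1 hac ⟨_, ht.symm⟩
    have hred : FreeGroup.IsReduced (rword a ++ rword w) := by
      rw [FreeGroup.IsReduced, List.isChain_append]
      refine ⟨isReduced_rword a, isReduced_rword w, fun z hz x' hx' h => ?_⟩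
      obtain rfl : x = x' := by simpa [hwv] using hx'
      by_contra hne
      apply hlast z hz
      rw [hy]
      ext
      · exact congrArg Fin.val h
      · cases h1 : z.2 <;> cases h2 : x.2 <;> simp_all
    have hrw : rword (a * w) = rword a ++ rword w := by
      conv_lhs => rw [← mk_rword a, ← mk_rword w, FreeGroup.mul_mk]
      exact rword_mk hred
    have hcyc : FreeGroup.IsCyclicallyReduced (rword (a * w)) := by
      rw [hrw]
      refine ⟨hred, fun z hz z' hz' h => ?_⟩
      have hzy : z = y := by
        rw [hwv, ← List.cons_append, ← List.append_assoc] at hz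
        simpa only [List.getLast?_concat, Option.mem_def, Option.some.injEq, eq_comm] using hz
      rw [List.head?_append_of_ne_nil _ hnil] at hz'
      by_contra hne
      apply hhead z' hz'
      subst hzy
      ext
      · rw [← h, hyx1]
      · cases h1 : z.2 <;> cases h2 : x.2 <;> cases h3 : z'.2 <;> simp_all
    have haw1 : a * w ≠ 1 := by
      intro h
      rw [h] at hrw
      simp [rword] at hrw
      exact ha1 hrw.1
    apply smul_mem_treeVerts ha
    have := prefix_mem_of_cyc (A.mul_mem ha hw) haw1 hcyc (p := rword a ++ p)
      (by rw [hrw]; exact List.prefix_append_right_inj _ |>.2 hp)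
    rw [← FreeGroup.mul_mk, mk_rword] at this
    exact this

/-! ### Long words lie in a tree or contain an element of `𝒞` -/

lemma pathIn_iff {n : ℕ} {g : F n} {S : Set (F n)} :
    pathIn g S ↔ ∀ p, p <+: rword g → FreeGroup.mk p ∈ S := by
  constructor
  · intro h p hp
    rw [List.prefix_iff_eq_take.1 hp]
    exact h _ hp.length_le
  · intro h m _
    exact h _ (List.take_prefix _ _)

lemma pathIn_iff_mk {n : ℕ} {l : List (Letter n)} (hl : FreeGroup.IsReduced l) {S : Set (F n)} :
    pathIn (FreeGroup.mk l) S ↔ ∀ p, p <+: l → FreeGroup.mk p ∈ S := by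
  rw [pathIn_iff, rword_mk hl]

/-- A word of length at least `L + 2` without subwords in `𝒞` has its path in one of the trees. -/
lemma exists_tree {n r L : ℕ} {A : Fin r → Subgroup (F n)} (hdiam : DiamBound A L)
    (k : ℕ) : ∀ l : List (Letter n), FreeGroup.IsReduced l → l.length = L + 2 + k →
      FreeGroup.mk l ∉ FmA A L →
      ∃ (i : Fin r) (B : Subgroup (F n)), GammaMem A i B ∧
        ∀ p, p <+: l → FreeGroup.mk p ∈ treeVerts B := by
  have base : ∀ l s : List (Letter n), FreeGroup.IsReduced l → s <:+: l → s.length = L + 2 →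
      FreeGroup.mk l ∉ FmA A L → ∃ (i : Fin r) (B : Subgroup (F n)), GammaMem A i B ∧
        ∀ p, p <+: s → FreeGroup.mk p ∈ treeVerts B := by
    intro l s hl hs hlen hmem
    have hsr := hl.infix hs
    by_contra! hcon
    apply hmem
    refine ⟨FreeGroup.mk s, ⟨by rw [wlen_mk hsr, hlen], fun i B hB hp => ?_⟩, ?_⟩
    · obtain ⟨p, hp1, hp2⟩ := hcon i B hB
      exact hp2 ((pathIn_iff_mk hsr).1 hp p hp1)
    · rw [rword_mk hl, rword_mk hsr]; exact hs
  induction k with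
  | zero => exact fun l hl hlen hmem => base l l hl (List.infix_refl l) (by simpa using hlen) hmem
  | succ k ih =>
    intro l hl hlen hmem
    rcases l.eq_nil_or_concat with rfl | ⟨l', b, rfl⟩
    · simp at hlen
    rw [List.concat_eq_append] at *
    simp only [List.length_append, List.length_singleton] at hlen
    have hl' : FreeGroup.IsReduced l' := hl.infix ⟨[], [b], by simp⟩
    obtain ⟨i, B, hB, hp⟩ := ih l' hl' (by omega) (by
      rintro ⟨x, hx, hi⟩
      refine hmem ⟨x, hx, ?_⟩
      rw [rword_mk hl'] at hi
      rw [rword_mk hl]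
      exact hi.trans ⟨[], [b], by simp⟩)
    -- `l = u s b` where `s` has length `L + 1`
    obtain ⟨u, s, rfl, hs⟩ : ∃ u s, l' = u ++ s ∧ s.length = L + 1 :=
      ⟨l'.take (k + 1), l'.drop (k + 1), by simp, by simp; omega⟩
    obtain ⟨j, B', hB', hp'⟩ := base (u ++ s ++ [b]) (s ++ [b]) hl ⟨u, [], by simp⟩
      (by simp [hs]) hmem
    have hsr : FreeGroup.IsReduced s := hl'.infix ⟨u, [], by simp⟩
    have tr : ∀ p, p <+: s ++ [b] →
        FreeGroup.mk (u ++ p) ∈ treeVerts (conjSub (FreeGroup.mk u) B') := by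
      intro p hpp
      rw [mem_treeVerts_conj, ← FreeGroup.mul_mk, inv_mul_cancel_left]
      exact hp' p hpp
    have e : B = conjSub (FreeGroup.mk u) B' := by
      refine eq_of_far hdiam hB.inSystem (inSystem_conj hB'.inSystem _)
        (x := FreeGroup.mk u) (y := FreeGroup.mk (u ++ s))
        (hp u (List.prefix_append _ _)) (by simpa using tr [] (List.nil_prefix))
        (hp _ (List.prefix_refl _)) (tr s (List.prefix_append _ _)) ?_
      rw [← FreeGroup.mul_mk, inv_mul_cancel_left, wlen_mk hsr, hs]
      omega
    refine ⟨i, B, hB, fun p hpp => ?_⟩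
    rcases List.prefix_concat_iff.1 hpp with rfl | hpp
    · rw [e, List.append_assoc]
      exact tr _ (List.prefix_refl _)
    · exact hp p hpp

lemma exists_tree' {n r L : ℕ} {A : Fin r → Subgroup (F n)} (hdiam : DiamBound A L)
    {g : F n} (hg : L + 2 ≤ wlen g) (hmem : g ∉ FmA A L) :
    ∃ (i : Fin r) (B : Subgroup (F n)), GammaMem A i B ∧
        ∀ p, p <+: rword g → FreeGroup.mk p ∈ treeVerts B :=
  exists_tree hdiam (wlen g - (L + 2)) (rword g) (isReduced_rword g)
    (by rw [wlen] at *; omega) (by rwa [mk_rword])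

/-! ### Nonemptiness of `𝒞` -/

/-- If `𝒞` is empty, `u` is a long word with path in `T_B`, and `v u` is a reduced word beginning
with `u`, then `v ∈ B`. -/
lemma mem_of_prefix {n r L : ℕ} {A : Fin r → Subgroup (F n)} (hsys : IsSystem A)
    (hmal : SystemMalnormal A) (hdiam : DiamBound A L) (hC : Ccal A L = ∅)
    {i : Fin r} {B : Subgroup (F n)} (hB : GammaMem A i B) {u v : List (Letter n)}
    (hu : L + 2 ≤ u.length) (hur : FreeGroup.IsReduced u) (huB : FreeGroup.mk u ∈ treeVerts B)
    (hvu : FreeGroup.IsReduced (v ++ u)) (hpre : u <+: v ++ u) :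
    FreeGroup.mk v ∈ B := by
  obtain ⟨j, B', hB', hp⟩ := exists_tree' (A := A) (g := FreeGroup.mk (v ++ u)) hdiam
    (by rw [wlen_mk hvu, List.length_append]; omega)
    (by rintro ⟨x, hx, -⟩; simp [hC] at hx)
  rw [rword_mk hvu] at hp
  have hlen : L < wlen ((1 : F n)⁻¹ * FreeGroup.mk u) := by
    rw [inv_one, one_mul, wlen_mk hur]; omega
  obtain rfl : B = B' := eq_of_far hdiam hB.inSystem hB'.inSystem hB.2 hB'.2 huB (hp u hpre) hlen
  refine mem_of_far hsys hmal hdiam hB.inSystem hB.2 huB ?_ ?_ hlen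
  · rw [mul_one]; exact hp v (List.prefix_append _ _)
  · rw [FreeGroup.mul_mk]; exact hp _ (List.prefix_refl _)

lemma Ccal_nonempty {n r L : ℕ} (hn : 2 ≤ n) {A : Fin r → Subgroup (F n)} (hsys : IsSystem A)
    (hmal : SystemMalnormal A) (hdiam : DiamBound A L) : (Ccal A L).Nonempty := by
  rw [Set.nonempty_iff_ne_empty]
  intro hC
  set a : Fin n := ⟨0, by omega⟩ with ha
  set u : List (Letter n) := List.replicate (L + 2) (a, true) with hu
  have hrep : ∀ k, FreeGroup.IsReduced (List.replicate k ((a, true) : Letter n)) :=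
    fun k => List.isChain_replicate_of_rel _ (fun _ => rfl)
  have hul : u.length = L + 2 := by simp [hu]
  obtain ⟨i, B, hB, hp⟩ := exists_tree' (A := A) (g := FreeGroup.mk u) hdiam
    (by rw [wlen_mk (hrep _), hul]) (by rintro ⟨x, hx, -⟩; simp [hC] at hx)
  rw [rword_mk (hrep _)] at hp
  have huB := hp u (List.prefix_refl _)
  have haB : FreeGroup.of a ∈ B := by
    have e : [((a, true) : Letter n)] ++ u = u ++ [(a, true)] := by
      rw [hu, ← List.replicate_one, ← List.replicate_add, ← List.replicate_add, add_comm]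
    refine mem_of_prefix (v := [(a, true)]) hsys hmal hdiam hC hB hul.ge (hrep _) huB ?_ ?_
    · exact hrep (L + 3)
    · rw [e]; exact List.prefix_append _ _
  have huB' : FreeGroup.mk u ∈ B := by
    have : FreeGroup.mk u = FreeGroup.of a ^ (L + 2) := by
      rw [FreeGroup.of, FreeGroup.pow_mk, hu]; simp
    rw [this]; exact B.pow_mem haB _
  have hall : ∀ d, FreeGroup.of d ∈ B := by
    intro d
    by_cases hd : d = a
    · rwa [hd]
    have := mem_of_prefix (v := u ++ [(d, true)]) hsys hmal hdiam hC hB hul.ge (hrep _) huB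
      (by
        rw [List.append_assoc, FreeGroup.IsReduced, List.isChain_append]
        refine ⟨hrep _, ?_, fun x hx y hy h => ?_⟩
        · rw [List.isChain_append]
          refine ⟨by simp, hrep _, fun x hx y hy h => ?_⟩
          have h1 : y = (a, true) := by simpa [hu, List.replicate_succ, eq_comm] using hy
          have h2 : x = (d, true) := by simpa [eq_comm] using hx
          simp [h1, h2]
        · have h1 : y = (d, true) := by simpa [eq_comm] using hy
          have h2 : x = (a, true) := List.eq_of_mem_replicate (List.mem_of_getLast? hx)
          simp [h1, h2])
      (by rw [List.append_assoc]; exact List.prefix_append _ _)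
    rw [← FreeGroup.mul_mk, B.mul_mem_cancel_left huB'] at this
    exact this
  have htop : B = ⊤ := by
    rw [eq_top_iff, ← FreeGroup.closure_range_of (Fin n), Subgroup.closure_le]
    rintro _ ⟨d, rfl⟩
    exact hall d
  obtain ⟨⟨g, rfl⟩, -⟩ := hB
  apply hsys.2.2 i
  rw [eq_top_iff]
  intro b _
  have : g * b * g⁻¹ ∈ conjSub g (A i) := by rw [htop]; trivial
  rw [mem_conjSub] at this
  simpa [mul_assoc] using this

/-- The set 𝒞 is nonempty; long words avoiding the trees contain an element of 𝒞 as a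
subword; nonperipheral cyclically reduced elements have a power in F_n − 𝒜; and
elements of F_n − 𝒜 lie in no A_i. -/
theorem statement_3 (n r L : ℕ) (hn : 2 ≤ n) (A : Fin r → Subgroup (F n))
    (hsys : IsSystem A) (hmal : SystemMalnormal A) (hL : 1 ≤ L)
    (hdiam : DiamBound A L) (hbase : ∀ i, (1 : F n) ∈ treeVerts (A i)) :
    (Ccal A L).Nonempty ∧
      (∀ g : F n, L + 2 ≤ wlen g →
        (∀ (i : Fin r) (B : Subgroup (F n)), GammaMem A i B → ¬ pathIn g (treeVerts B)) →
        g ∈ FmA A L) ∧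
      (∀ g : F n, ¬ Peripheral A g → CyclicallyReduced g →
        ∃ m : ℕ, 1 ≤ m ∧ g ^ m ∈ FmA A L) ∧
      ∀ w ∈ FmA A L, ∀ i : Fin r, w ∉ A i := by
  refine ⟨Ccal_nonempty hn hsys hmal hdiam, ?_, ?_, ?_⟩
  · intro g hg hno
    by_contra hmem
    obtain ⟨i, B, hB, hp⟩ := exists_tree' hdiam hg hmem
    exact hno i B hB (pathIn_iff.2 hp)
  · intro g hper hcyc
    rw [cyclicallyReduced_iff] at hcyc
    by_contra! hno
    have hg1 : g ≠ 1 := fun h => hper (Or.inl h)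
    have hpos : 1 ≤ wlen g := Nat.one_le_iff_ne_zero.2 (mt FreeGroup.norm_eq_zero.1 hg1)
    obtain ⟨i, B, hB, hp⟩ := exists_tree' (g := g ^ (L + 2)) hdiam
      (by rw [wlen_pow hcyc]; nlinarith) (hno _ (by omega))
    have hpre : ∀ k ≤ L + 2, g ^ k ∈ treeVerts B := by
      intro k hk
      rw [← mk_rword (g ^ k)]
      apply hp
      obtain ⟨j, hj⟩ := Nat.exists_eq_add_of_le hk
      rw [rword_pow hcyc, rword_pow hcyc, hj, List.replicate_add, List.flatten_append]
      exact List.prefix_append _ _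
    refine hper (Or.inr ⟨B, hB.inSystem, ?_⟩)
    refine mem_of_far hsys hmal hdiam hB.inSystem (x := 1) (y := g ^ (L + 1)) hB.2
      (hpre _ (by omega)) ?_ ?_ ?_
    · simpa using hpre 1 (by omega)
    · rw [← pow_succ']; exact hpre _ le_rfl
    · rw [inv_one, one_mul, wlen_pow hcyc]; nlinarith
  · rintro w ⟨x, ⟨-, hx⟩, u, v, huv⟩ i hw
    have hp := pathIn_of_mem _ (A i) w rfl hw (hbase i)
    have hup : FreeGroup.mk u ∈ treeVerts (A i) := hp u ⟨_, by rw [← huv, List.append_assoc]⟩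
    refine hx i (conjSub (FreeGroup.mk u)⁻¹ (A i)) ⟨⟨_, rfl⟩, ?_⟩ (pathIn_iff.2 fun p hpx => ?_)
    · rw [mem_treeVerts_conj]; simpa using hup
    · rw [mem_treeVerts_conj, inv_inv, FreeGroup.mul_mk]
      apply hp
      rw [← huv]
      exact ((List.prefix_append_right_inj u).2 hpx).trans (List.prefix_append _ _)

end RelCurr
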